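/- arXiv:math/0102066 — 2 statements merged into one kernel-verified Lean document; each statement's English description precedes it below -/
import Mathlib

section
/- For all permutations σ ∈ S_p and τ ∈ S_q one has σ/τ ≤ σ\τ in the weak Bruhat order on S_{p+q}. -/
/-! Symmetric groups `Sₙ` are modelled as `Equiv.Perm (Fin n)` (with `0`-indexed letters, so
the letter `i ∈ {1, …, n}` of the paper corresponds to `i - 1 : Fin n`), with the group law
`σ · τ = σ * τ` given by composition: `(σ * τ) x = σ (τ x)`. -/

/-- `s` is a Coxeter generator `sᵢ`, i.e. the transposition of two consecutive letters. -/
def IsAdjacentTransposition {n : ℕ} (s : Equiv.Perm (Fin n)) : Prop :=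
  ∃ (i : ℕ) (h : i + 1 < n), s = Equiv.swap ⟨i, by omega⟩ ⟨i + 1, h⟩

/-- The length `l(σ)`: the least `k` such that `σ` is a product of `k` Coxeter
generators `sᵢ`. -/
noncomputable def permLength {n : ℕ} (σ : Equiv.Perm (Fin n)) : ℕ :=
  sInf {k | ∃ L : List (Equiv.Perm (Fin n)),
    L.length = k ∧ (∀ s ∈ L, IsAdjacentTransposition s) ∧ L.prod = σ}

/-- The weak Bruhat order on `Sₙ`: `ω ≤ σ` iff there is `τ` with `σ = τ · ω` and
`l(σ) = l(τ) + l(ω)`. -/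
def weakLe {n : ℕ} (ω σ : Equiv.Perm (Fin n)) : Prop :=
  ∃ τ : Equiv.Perm (Fin n), σ = τ * ω ∧ permLength σ = permLength τ + permLength ω

/-- The strict weak Bruhat order. -/
def weakLt {n : ℕ} (ω σ : Equiv.Perm (Fin n)) : Prop :=
  weakLe ω σ ∧ ω ≠ σ

/-- `σ × τ`: the image of `(σ, τ)` under the canonical embedding
`S_p × S_q ↪ S_{p+q}`, where `σ` permutes the first `p` letters and `τ` the last `q`. -/
def blockSum {p q : ℕ} (σ : Equiv.Perm (Fin p)) (τ : Equiv.Perm (Fin q)) :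
    Equiv.Perm (Fin (p + q)) :=
  finSumFinEquiv.symm.trans ((Equiv.sumCongr σ τ).trans finSumFinEquiv)

/-- `ξ` is a `(p,q)`-shuffle: `ξ(1) < … < ξ(p)` and `ξ(p+1) < … < ξ(p+q)`. -/
def IsShuffle (p q : ℕ) (ξ : Equiv.Perm (Fin (p + q))) : Prop :=
  (∀ i j : Fin (p + q), (i : ℕ) < (j : ℕ) → (j : ℕ) < p → ξ i < ξ j) ∧
  (∀ i j : Fin (p + q), p ≤ (i : ℕ) → (i : ℕ) < (j : ℕ) → ξ i < ξ j)

/-- `ξ_{p,q} ∈ S_{p+q}`: the permutation with one-line notation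
`(q+1, q+2, …, q+p, 1, 2, …, q)`. -/
def xi (p q : ℕ) : Equiv.Perm (Fin (p + q)) :=
  finSumFinEquiv.symm.trans ((Equiv.sumComm (Fin p) (Fin q)).trans
    (finSumFinEquiv.trans (finCongr (Nat.add_comm q p))))

/-- Transport of a permutation along an equality of the number of letters. -/
def permCast {m n : ℕ} (h : m = n) (π : Equiv.Perm (Fin m)) : Equiv.Perm (Fin n) :=
  (finCongr h).permCongr π

/-- The grafting `σ ∨ τ ∈ S_{p+q+1}` of `σ ∈ S_p` and `τ ∈ S_q`: in 1-indexed one-line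
notation, `(σ∨τ)(i) = σ(i)` for `1 ≤ i ≤ p`, `(σ∨τ)(p+1) = p+q+1`, and
`(σ∨τ)(i) = τ(i-p-1) + p` for `p+2 ≤ i ≤ p+q+1`.  (Equivalently,
`σ ∨ τ = (σ × τ × 1₁) · s_{p+q} · s_{p+q-1} · ⋯ · s_{p+1}`.) -/
def graft {p q : ℕ} (σ : Equiv.Perm (Fin p)) (τ : Equiv.Perm (Fin q)) :
    Equiv.Perm (Fin (p + q + 1)) :=
  blockSum (blockSum σ τ) (1 : Equiv.Perm (Fin 1)) *
    permCast (by omega) (blockSum (1 : Equiv.Perm (Fin p)) (finRotate (q + 1))⁻¹)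

/-- The `over` operation on permutations: `σ / τ := σ × τ`. -/
def overP {p q : ℕ} (σ : Equiv.Perm (Fin p)) (τ : Equiv.Perm (Fin q)) :
    Equiv.Perm (Fin (p + q)) :=
  blockSum σ τ

/-- The `under` operation on permutations: `σ \ τ := ξ_{p,q} · (σ × τ)`. -/
def underP {p q : ℕ} (σ : Equiv.Perm (Fin p)) (τ : Equiv.Perm (Fin q)) :
    Equiv.Perm (Fin (p + q)) :=
  xi p q * blockSum σ τ

/-- The set of inversions. -/
def invSet {n : ℕ} (π : Equiv.Perm (Fin n)) : Finset (Fin n × Fin n) :=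
  Finset.univ.filter fun x => x.1 < x.2 ∧ π x.2 < π x.1

lemma mem_invSet {n : ℕ} (π : Equiv.Perm (Fin n)) (i j : Fin n) :
    (i, j) ∈ invSet π ↔ i < j ∧ π j < π i := by
  simp [invSet]

lemma swap_lt {n : ℕ} (i : ℕ) (h : i + 1 < n) (x y : Fin n)
    (hxy : ¬ (x.val = i ∧ y.val = i + 1)) (hyx : ¬ (y.val = i ∧ x.val = i + 1)) :
    Equiv.swap (⟨i, by omega⟩ : Fin n) ⟨i + 1, h⟩ x < Equiv.swap (⟨i, by omega⟩ : Fin n) ⟨i + 1, h⟩ y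
      ↔ x < y := by
  rw [Equiv.swap_apply_def, Equiv.swap_apply_def]
  simp only [Fin.ext_iff, Fin.lt_def]
  split_ifs <;> simp <;> omega

lemma inv_swap_up {n : ℕ} (π : Equiv.Perm (Fin n)) (i : ℕ) (h : i + 1 < n)
    (hlt : π.symm ⟨i, by omega⟩ < π.symm ⟨i + 1, h⟩) :
    (invSet (Equiv.swap ⟨i, by omega⟩ ⟨i + 1, h⟩ * π)).card = (invSet π).card + 1 := by
  have : invSet (Equiv.swap ⟨i, by omega⟩ ⟨i + 1, h⟩ * π) =
      insert (π.symm ⟨i, by omega⟩, π.symm ⟨i + 1, h⟩) (invSet π) := by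
    ext ⟨x, y⟩
    rw [Finset.mem_insert, mem_invSet, mem_invSet, Prod.mk.injEq, Equiv.eq_symm_apply,
      Equiv.eq_symm_apply, Equiv.Perm.mul_apply, Equiv.Perm.mul_apply]
    by_cases h1 : (π x).val = i ∧ (π y).val = i + 1
    · have hx : π x = ⟨i, by omega⟩ := Fin.ext h1.1
      have hy : π y = ⟨i + 1, h⟩ := Fin.ext h1.2
      have : x < y := by
        rw [← hx, ← hy] at hlt; simpa using hlt
      rw [hx, hy]
      simp [this]
    · by_cases h2 : (π y).val = i ∧ (π x).val = i + 1
      · have hx : π y = ⟨i, by omega⟩ := Fin.ext h2.1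
        have hy : π x = ⟨i + 1, h⟩ := Fin.ext h2.2
        have : y < x := by
          rw [← hx, ← hy] at hlt; simpa using hlt
        rw [hx, hy]
        simp [this.le, this.not_gt]
      · rw [swap_lt i h _ _ h2 h1]
        simp only [Fin.ext_iff]
        tauto
  rw [this, Finset.card_insert_of_notMem]
  rw [mem_invSet]
  simp [Fin.lt_def, -Fin.val_fin_lt]

lemma inv_swap_down {n : ℕ} (π : Equiv.Perm (Fin n)) (i : ℕ) (h : i + 1 < n)
    (hlt : π.symm ⟨i + 1, h⟩ < π.symm ⟨i, by omega⟩) :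
    (invSet π).card = (invSet (Equiv.swap ⟨i, by omega⟩ ⟨i + 1, h⟩ * π)).card + 1 := by
  have := inv_swap_up (Equiv.swap ⟨i, by omega⟩ ⟨i + 1, h⟩ * π) i h (by
    have e : ∀ z, (Equiv.swap (⟨i, by omega⟩ : Fin n) ⟨i + 1, h⟩ * π).symm z
      = π.symm (Equiv.swap (⟨i, by omega⟩ : Fin n) ⟨i + 1, h⟩ z) := fun z => by
        rw [Equiv.symm_apply_eq]; simp
    rw [e, e]; simpa using hlt)
  rwa [Equiv.swap_mul_self_mul] at this

lemma invSet_one_card {n : ℕ} : (invSet (1 : Equiv.Perm (Fin n))).card = 0 := by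
  rw [Finset.card_eq_zero, Finset.eq_empty_iff_forall_notMem]
  rintro ⟨x, y⟩ hx
  rw [mem_invSet] at hx
  exact absurd hx.1 hx.2.not_gt

lemma inv_le_length {n : ℕ} (L : List (Equiv.Perm (Fin n)))
    (hL : ∀ s ∈ L, IsAdjacentTransposition s) : (invSet L.prod).card ≤ L.length := by
  induction L with
  | nil => simpa using invSet_one_card.le
  | cons s L ih =>
    have ih := ih fun t ht => hL t (List.mem_cons_of_mem _ ht)
    obtain ⟨i, h, rfl⟩ := hL s List.mem_cons_self
    rw [List.prod_cons, List.length_cons]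
    rcases lt_trichotomy (L.prod.symm ⟨i, by omega⟩) (L.prod.symm ⟨i + 1, h⟩) with h1 | h1 | h1
    · rw [inv_swap_up _ i h h1]; omega
    · simp at h1
    · have := inv_swap_down _ i h h1; omega

lemma exists_word {n : ℕ} (k : ℕ) (π : Equiv.Perm (Fin n)) (hk : (invSet π).card = k) :
    ∃ L : List (Equiv.Perm (Fin n)),
    L.length = k ∧ (∀ s ∈ L, IsAdjacentTransposition s) ∧ L.prod = π := by
  induction k generalizing π with
  | zero =>
    refine ⟨[], rfl, by simp, ?_⟩
    have hm : StrictMono π := by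
      intro x y hxy
      rcases lt_trichotomy (π x) (π y) with h | h | h
      · exact h
      · exact absurd (π.injective h) hxy.ne
      · rw [Finset.card_eq_zero] at hk
        have := (mem_invSet π x y).2 ⟨hxy, h⟩
        simp [hk] at this
    ext x
    have := Subsingleton.elim (hm.orderIsoOfSurjective π π.surjective) (OrderIso.refl _)
    have := congrArg (fun e : Fin n ≃o Fin n => (e x).val) this
    simpa using this.symm
  | succ k ih =>
    by_cases hd : ∃ (i : ℕ) (h : i + 1 < n), π.symm ⟨i + 1, h⟩ < π.symm ⟨i, by omega⟩
    · obtain ⟨i, h, hlt⟩ := hd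
      have := inv_swap_down π i h hlt
      obtain ⟨L, hl, ha, hp⟩ := ih (Equiv.swap ⟨i, by omega⟩ ⟨i + 1, h⟩ * π) (by omega)
      refine ⟨Equiv.swap ⟨i, by omega⟩ ⟨i + 1, h⟩ :: L, by simp [hl], ?_, ?_⟩
      · intro s hs
        rcases List.mem_cons.1 hs with rfl | hs
        · exact ⟨i, h, rfl⟩
        · exact ha s hs
      · rw [List.prod_cons, hp, Equiv.swap_mul_self_mul]
    · exfalso
      push Not at hd
      have key : ∀ (d i : ℕ) (h : i + d < n), π.symm ⟨i, by omega⟩ ≤ π.symm ⟨i + d, h⟩ := by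
        intro d
        induction d with
        | zero => intro i h; exact le_rfl
        | succ d ihd => intro i h; exact (ihd i (by omega)).trans (hd (i + d) h)
      have : invSet π = ∅ := by
        rw [Finset.eq_empty_iff_forall_notMem]
        rintro ⟨x, y⟩ hx
        rw [mem_invSet] at hx
        obtain ⟨h1, h2⟩ := hx
        obtain ⟨d, hd⟩ := Nat.exists_eq_add_of_lt h2
        have := key (d + 1) (π y).val (by have := (π x).isLt; omega)
        have e : (⟨(π y).val + (d + 1), by have := (π x).isLt; omega⟩ : Fin n) = π x :=
          Fin.ext (by simp; omega)
        rw [e] at this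
        simp at this
        exact absurd h1 this.not_gt
      rw [this] at hk
      simp at hk

lemma permLength_eq {n : ℕ} (π : Equiv.Perm (Fin n)) : permLength π = (invSet π).card := by
  unfold permLength
  apply le_antisymm
  · exact Nat.sInf_le (exists_word _ π rfl)
  · refine le_csInf ⟨_, exists_word _ π rfl⟩ ?_
    rintro k ⟨L, rfl, hL, rfl⟩
    exact inv_le_length L hL

lemma inv_mul {p q : ℕ} (σ : Equiv.Perm (Fin p)) (τ : Equiv.Perm (Fin q)) :
    (invSet (xi p q * blockSum σ τ)).card = (invSet (xi p q)).card + (invSet (blockSum σ τ)).card := by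
  rw [← Finset.card_union_of_disjoint]
  · congr 1
    ext ⟨x, y⟩
    rw [Finset.mem_union, mem_invSet, mem_invSet, mem_invSet]
    induction x using Fin.addCases <;> induction y using Fin.addCases <;>
      simp [xi, blockSum, Fin.lt_def, -Fin.val_fin_lt] <;> omega
  · rw [Finset.disjoint_left]
    rintro ⟨x, y⟩
    rw [mem_invSet, mem_invSet]
    induction x using Fin.addCases <;> induction y using Fin.addCases <;>
      simp [xi, blockSum, Fin.lt_def, -Fin.val_fin_lt] <;> omega

/-- for all `σ ∈ S_p`, `τ ∈ S_q` one has `σ/τ ≤ σ\τ` in the weak Bruhat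
order on `S_{p+q}`. -/
theorem stmt7 (p q : ℕ) (σ : Equiv.Perm (Fin p)) (τ : Equiv.Perm (Fin q)) :
    weakLe (overP σ τ) (underP σ τ) := by
  refine ⟨xi p q, rfl, ?_⟩
  rw [permLength_eq, permLength_eq, permLength_eq]
  exact inv_mul σ τ
end

section
/- On the augmentation ideal of the Malvenuto–Reutenauer algebra, the products ≺ and ≻ defined by σ ≺ τ := Σ_{ω ∈ Sh²(p,q)} ω·(σ × τ) and σ ≻ τ := Σ_{ω ∈ Sh¹(p,q)} ω·(σ × τ) (for σ ∈ S_p, τ ∈ S_q, p,q ≥ 1, extended bilinearly) satisfy the dendriform relations: (a ≺ b) ≺ c = a ≺ (b ≺ c) + a ≺ (b ≻ c), a ≻ (b ≺ c) = (a ≻ b) ≺ c, and a ≻ (b ≻ c) = (a ≺ b) ≻ c + (a ≻ b) ≻ c, for all a, b, c in ⊕_{n≥1} ℚ[S_n]; moreover σ * τ = σ ≺ τ + σ ≻ τ where * is the Malvenuto–Reutenauer product. -/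
/-- `Sh¹(p,q)`: the `(p,q)`-shuffles `ω` with `ω(p+q) = p+q`. -/
def Sh1 (p q : ℕ) (ω : Equiv.Perm (Fin (p + q))) : Prop :=
  IsShuffle p q ω ∧ ∀ i : Fin (p + q), (i : ℕ) + 1 = p + q → ω i = i

/-- `Sh²(p,q)`: the `(p,q)`-shuffles `ω` with `ω(p) = p+q`. -/
def Sh2 (p q : ℕ) (ω : Equiv.Perm (Fin (p + q))) : Prop :=
  IsShuffle p q ω ∧ ∀ i : Fin (p + q), (i : ℕ) + 1 = p → ((ω i : ℕ) + 1 = p + q)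

attribute [local instance] Classical.propDecidable

/-- `σ ≺ τ := Σ_{ω ∈ Sh²(p,q)} ω · (σ × τ)` on basis elements. -/
noncomputable def precB {p q : ℕ} (σ : Equiv.Perm (Fin p)) (τ : Equiv.Perm (Fin q)) :
    Equiv.Perm (Fin (p + q)) →₀ ℚ :=
  ∑ ω ∈ Finset.univ.filter (Sh2 p q), Finsupp.single (ω * blockSum σ τ) 1

/-- `σ ≻ τ := Σ_{ω ∈ Sh¹(p,q)} ω · (σ × τ)` on basis elements. -/
noncomputable def succB {p q : ℕ} (σ : Equiv.Perm (Fin p)) (τ : Equiv.Perm (Fin q)) :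
    Equiv.Perm (Fin (p + q)) →₀ ℚ :=
  ∑ ω ∈ Finset.univ.filter (Sh1 p q), Finsupp.single (ω * blockSum σ τ) 1

/-- The Malvenuto–Reutenauer product `σ * τ := Σ_{x ∈ Sh(p,q)} x · (σ × τ)` on basis
elements. -/
noncomputable def starB {p q : ℕ} (σ : Equiv.Perm (Fin p)) (τ : Equiv.Perm (Fin q)) :
    Equiv.Perm (Fin (p + q)) →₀ ℚ :=
  ∑ ω ∈ Finset.univ.filter (IsShuffle p q), Finsupp.single (ω * blockSum σ τ) 1

/-- The bilinear extension of `≺` to the homogeneous components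
`ℚ[S_p] = Perm (Fin p) →₀ ℚ` of `ℚ[S_∞]`. -/
noncomputable def precHat {p q : ℕ} (a : Equiv.Perm (Fin p) →₀ ℚ)
    (b : Equiv.Perm (Fin q) →₀ ℚ) : Equiv.Perm (Fin (p + q)) →₀ ℚ :=
  a.sum fun σ c => b.sum fun τ d => (c * d) • precB σ τ

/-- The bilinear extension of `≻`. -/
noncomputable def succHat {p q : ℕ} (a : Equiv.Perm (Fin p) →₀ ℚ)
    (b : Equiv.Perm (Fin q) →₀ ℚ) : Equiv.Perm (Fin (p + q)) →₀ ℚ :=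
  a.sum fun σ c => b.sum fun τ d => (c * d) • succB σ τ

/-- The bilinear extension of the Malvenuto–Reutenauer product `*`. -/
noncomputable def starHat {p q : ℕ} (a : Equiv.Perm (Fin p) →₀ ℚ)
    (b : Equiv.Perm (Fin q) →₀ ℚ) : Equiv.Perm (Fin (p + q)) →₀ ℚ :=
  a.sum fun σ c => b.sum fun τ d => (c * d) • starB σ τ

/-- Transport along an equality of degrees. -/
noncomputable def castF {m n : ℕ} (h : m = n) (a : Equiv.Perm (Fin m) →₀ ℚ) :
    Equiv.Perm (Fin n) →₀ ℚ :=
  Finsupp.equivMapDomain ((finCongr h).permCongr) a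

/-- standardization -/
noncomputable def stdz {n m : ℕ} (f : Fin n → Fin m) : Equiv.Perm (Fin n) :=
  (Tuple.sort f)⁻¹

theorem stdz_lt {n m : ℕ} (f : Fin n → Fin m) (hf : Function.Injective f) (i j : Fin n) :
    stdz f i < stdz f j ↔ f i < f j := by
  have hm : StrictMono (f ∘ Tuple.sort f) :=
    (Tuple.monotone_sort f).strictMono_of_injective (hf.comp (Tuple.sort f).injective)
  have := hm.lt_iff_lt (a := stdz f i) (b := stdz f j)
  rw [← this]
  simp [stdz]

theorem perm_eq_of_lt {n : ℕ} (α β : Equiv.Perm (Fin n))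
    (h : ∀ i j, β i < β j → α i < α j) : α = β := by
  have hm : StrictMono (α * β⁻¹ : Equiv.Perm (Fin n)) := by
    intro i j hij
    simp only [Equiv.Perm.mul_apply]
    apply h
    simpa using hij
  have h2 : (α * β⁻¹ : Equiv.Perm (Fin n)) = 1 := by
    have : (hm.orderIsoOfSurjective _ (Equiv.surjective _)) = OrderIso.refl (Fin n) :=
      Subsingleton.elim _ _
    ext i
    have h3 := congrArg (fun e : Fin n ≃o Fin n => e i) this
    simpa using congrArg Fin.val h3
  exact mul_inv_eq_one.mp h2

noncomputable def lef {p q : ℕ} (π : Equiv.Perm (Fin (p + q))) : Equiv.Perm (Fin p) :=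
  stdz fun i => π (Fin.castAdd q i)

noncomputable def rig {p q : ℕ} (π : Equiv.Perm (Fin (p + q))) : Equiv.Perm (Fin q) :=
  stdz fun i => π (Fin.natAdd p i)

theorem lef_lt {p q : ℕ} (π : Equiv.Perm (Fin (p + q))) (i j : Fin p) :
    lef π i < lef π j ↔ π (Fin.castAdd q i) < π (Fin.castAdd q j) :=
  stdz_lt _ (π.injective.comp (Fin.castAdd_injective p q)) i j

theorem rig_lt {p q : ℕ} (π : Equiv.Perm (Fin (p + q))) (i j : Fin q) :
    rig π i < rig π j ↔ π (Fin.natAdd p i) < π (Fin.natAdd p j) :=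
  stdz_lt _ (π.injective.comp (Fin.natAdd_injective q p)) i j

theorem blockSum_castAdd {p q : ℕ} (σ : Equiv.Perm (Fin p)) (τ : Equiv.Perm (Fin q))
    (i : Fin p) : blockSum σ τ (Fin.castAdd q i) = Fin.castAdd q (σ i) := by
  simp [blockSum]

theorem blockSum_natAdd {p q : ℕ} (σ : Equiv.Perm (Fin p)) (τ : Equiv.Perm (Fin q))
    (i : Fin q) : blockSum σ τ (Fin.natAdd p i) = Fin.natAdd p (τ i) := by
  simp [blockSum]

theorem isShuffle_iff {p q : ℕ} (ω : Equiv.Perm (Fin (p + q))) :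
    IsShuffle p q ω ↔
      (∀ i j : Fin p, i < j → ω (Fin.castAdd q i) < ω (Fin.castAdd q j)) ∧
      (∀ i j : Fin q, i < j → ω (Fin.natAdd p i) < ω (Fin.natAdd p j)) := by
  constructor
  · rintro ⟨h1, h2⟩
    refine ⟨fun i j hij => h1 _ _ (by simpa using hij) (by simp), fun i j hij =>
      h2 _ _ (by simp) (by simpa using hij)⟩
  · rintro ⟨h1, h2⟩
    constructor
    · intro i j hij hj
      exact h1 ⟨i, by omega⟩ ⟨j, hj⟩ hij
    · intro i j hi hij
      have := h2 ⟨i - p, by omega⟩ ⟨j - p, by omega⟩ (by simp [Fin.lt_def]; omega)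
      convert this using 2 <;> ext <;> simp <;> omega

theorem isShuffle_mul {p q : ℕ} (σ : Equiv.Perm (Fin p)) (τ : Equiv.Perm (Fin q))
    (ω : Equiv.Perm (Fin (p + q))) :
    IsShuffle p q ω ↔ σ = lef (ω * blockSum σ τ) ∧ τ = rig (ω * blockSum σ τ) := by
  rw [isShuffle_iff]
  constructor
  · rintro ⟨h1, h2⟩
    constructor
    · refine (perm_eq_of_lt _ _ fun i j h => ?_).symm
      rw [lef_lt]
      simp only [Equiv.Perm.mul_apply, blockSum_castAdd]
      exact h1 _ _ h
    · refine (perm_eq_of_lt _ _ fun i j h => ?_).symm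
      rw [rig_lt]
      simp only [Equiv.Perm.mul_apply, blockSum_natAdd]
      exact h2 _ _ h
  · rintro ⟨h1, h2⟩
    constructor
    · intro i j hij
      have := lef_lt (ω * blockSum σ τ) (σ⁻¹ i) (σ⁻¹ j)
      rw [← h1] at this
      simpa [Equiv.Perm.mul_apply, blockSum_castAdd, hij] using this
    · intro i j hij
      have := rig_lt (ω * blockSum σ τ) (τ⁻¹ i) (τ⁻¹ j)
      rw [← h2] at this
      simpa [Equiv.Perm.mul_apply, blockSum_natAdd, hij] using this

def QQ (p q : ℕ) (π : Equiv.Perm (Fin (p + q))) : Prop :=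
  ∃ j : Fin q, ∀ i : Fin p, π (Fin.castAdd q i) < π (Fin.natAdd p j)

theorem QQ_mul {p q : ℕ} (σ : Equiv.Perm (Fin p)) (τ : Equiv.Perm (Fin q))
    (ω : Equiv.Perm (Fin (p + q))) : QQ p q (ω * blockSum σ τ) ↔ QQ p q ω := by
  simp only [QQ, Equiv.Perm.mul_apply, blockSum_castAdd, blockSum_natAdd]
  constructor
  · rintro ⟨j, h⟩
    exact ⟨τ j, fun i => by simpa using h (σ⁻¹ i)⟩
  · rintro ⟨j, h⟩
    exact ⟨τ⁻¹ j, fun i => by simpa using h (σ i)⟩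

theorem Sh1_iff {p q : ℕ} (hq : 1 ≤ q) (ω : Equiv.Perm (Fin (p + q))) :
    Sh1 p q ω ↔ IsShuffle p q ω ∧ QQ p q ω := by
  unfold Sh1
  refine and_congr_right fun hs => ?_
  obtain ⟨h1, h2⟩ := hs
  constructor
  · intro h
    refine ⟨⟨q - 1, by omega⟩, fun i => ?_⟩
    rw [h (Fin.natAdd p ⟨q - 1, by omega⟩) (by simp; omega)]
    have hne : ω (Fin.castAdd q i) ≠ ω (Fin.natAdd p ⟨q - 1, by omega⟩) := by
      intro he
      have := congrArg Fin.val (ω.injective he)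
      simp at this
      omega
    rw [h (Fin.natAdd p ⟨q - 1, by omega⟩) (by simp; omega)] at hne
    rw [Fin.lt_def]
    have : (ω (Fin.castAdd q i)).val ≠ p + (q - 1) := fun h => hne (Fin.ext (by simpa using h))
    have := (ω (Fin.castAdd q i)).isLt
    simp
    omega
  · rintro ⟨j, hj⟩ l hl
    obtain ⟨k, hk⟩ := ω.surjective l
    by_contra hne
    have hkl : k ≠ l := by rintro rfl; exact hne hk
    have hkl' : (k : ℕ) ≠ l := fun h => hkl (Fin.ext h)
    have hlt : ω k < ω l := by
      rcases Nat.lt_or_ge (k : ℕ) p with hkp | hkp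
      · have ha := hj ⟨k, hkp⟩
        have hb : ω (Fin.natAdd p j) ≤ ω l := by
          rcases Nat.lt_or_ge (p + j) l with h | h
          · exact (h2 _ _ (by simp) (by simpa using h)).le
          · have : Fin.natAdd p j = l := Fin.ext (by simp; omega)
            rw [this]
        exact lt_of_lt_of_le ha hb
      · exact h2 _ _ hkp (by omega)
    rw [hk, Fin.lt_def] at hlt
    have := (ω l).isLt
    omega

theorem Sh2_iff {p q : ℕ} (hp : 1 ≤ p) (ω : Equiv.Perm (Fin (p + q))) :
    Sh2 p q ω ↔ IsShuffle p q ω ∧ ¬ QQ p q ω := by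
  unfold Sh2
  refine and_congr_right fun hs => ?_
  obtain ⟨h1, h2⟩ := hs
  constructor
  · rintro h ⟨j, hj⟩
    have ha := hj ⟨p - 1, by omega⟩
    have hb := h (Fin.castAdd q ⟨p - 1, by omega⟩) (by simp; omega)
    rw [Fin.lt_def] at ha
    have := (ω (Fin.natAdd p j)).isLt
    omega
  · intro hQ l hl
    obtain ⟨k, hk⟩ := ω.surjective ⟨p + q - 1, by omega⟩
    have hk' : (ω k : ℕ) = p + q - 1 := by rw [hk]
    rcases Nat.lt_or_ge (k : ℕ) p with hkp | hkp
    · by_cases hkl : (k : ℕ) = l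
      · rw [← Fin.ext hkl]; omega
      · have := h1 k l (by omega) (by omega)
        rw [Fin.lt_def] at this
        have := (ω l).isLt
        omega
    · exfalso
      apply hQ
      refine ⟨⟨k - p, by omega⟩, fun i => ?_⟩
      have he : Fin.natAdd p (⟨k - p, by omega⟩ : Fin q) = k := Fin.ext (by simp; omega)
      rw [he]
      have hne : (ω (Fin.castAdd q i) : ℕ) ≠ ω k := by
        intro h
        have := congrArg Fin.val (ω.injective (Fin.ext h))
        simp at this
        omega
      have := (ω (Fin.castAdd q i)).isLt
      rw [Fin.lt_def]
      omega

theorem sum_single_apply {p q : ℕ} (S : Equiv.Perm (Fin (p + q)) → Prop)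
    (g π : Equiv.Perm (Fin (p + q))) :
    (∑ ω ∈ Finset.univ.filter S, Finsupp.single (ω * g) (1 : ℚ)) π =
      if S (π * g⁻¹) then 1 else 0 := by
  rw [Finsupp.finsetSum_apply, Finset.sum_filter]
  rw [Finset.sum_eq_single (π * g⁻¹)]
  · simp
  · intro b _ hb
    have : b * g ≠ π := fun h => hb (by rw [← h]; simp)
    simp [this]
  · simp

theorem starB_apply {p q : ℕ} (σ : Equiv.Perm (Fin p)) (τ : Equiv.Perm (Fin q))
    (π : Equiv.Perm (Fin (p + q))) :
    starB σ τ π = if σ = lef π ∧ τ = rig π then 1 else 0 := by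
  rw [starB, sum_single_apply]
  simp only [isShuffle_mul σ τ, inv_mul_cancel_right]

theorem succB_apply {p q : ℕ} (hq : 1 ≤ q) (σ : Equiv.Perm (Fin p)) (τ : Equiv.Perm (Fin q))
    (π : Equiv.Perm (Fin (p + q))) :
    succB σ τ π = if (σ = lef π ∧ τ = rig π) ∧ QQ p q π then 1 else 0 := by
  rw [succB, sum_single_apply]
  simp only [Sh1_iff hq, isShuffle_mul σ τ, ← QQ_mul σ τ (π * _), inv_mul_cancel_right]

theorem precB_apply {p q : ℕ} (hp : 1 ≤ p) (σ : Equiv.Perm (Fin p)) (τ : Equiv.Perm (Fin q))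
    (π : Equiv.Perm (Fin (p + q))) :
    precB σ τ π = if (σ = lef π ∧ τ = rig π) ∧ ¬ QQ p q π then 1 else 0 := by
  rw [precB, sum_single_apply]
  simp only [Sh2_iff hp, isShuffle_mul σ τ, ← QQ_mul σ τ (π * _), inv_mul_cancel_right]

theorem bil_apply {p q : ℕ} (B : Equiv.Perm (Fin p) → Equiv.Perm (Fin q) →
      (Equiv.Perm (Fin (p + q)) →₀ ℚ)) (π : Equiv.Perm (Fin (p + q))) (P : Prop) [Decidable P]
    (hB : ∀ σ τ, B σ τ π = if (σ = lef π ∧ τ = rig π) ∧ P then 1 else 0)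
    (a : Equiv.Perm (Fin p) →₀ ℚ) (b : Equiv.Perm (Fin q) →₀ ℚ) :
    (a.sum fun σ c => b.sum fun τ d => (c * d) • B σ τ) π =
      if P then a (lef π) * b (rig π) else 0 := by
  rw [Finsupp.sum_fintype _ _ (by simp)]
  simp_rw [fun σ => Finsupp.sum_fintype b (fun τ d => (a σ * d) • B σ τ) (by simp)]
  simp only [Finsupp.finsetSum_apply, Finsupp.smul_apply, hB]
  rw [Finset.sum_eq_single (lef π)]
  · rw [Finset.sum_eq_single (rig π)]
    · simp
    · intro c _ hc; simp [hc]
    · simp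
  · intro c _ hc; simp [hc]
  · simp

theorem starHat_apply {p q : ℕ} (a : Equiv.Perm (Fin p) →₀ ℚ) (b : Equiv.Perm (Fin q) →₀ ℚ)
    (π : Equiv.Perm (Fin (p + q))) : starHat a b π = a (lef π) * b (rig π) := by
  rw [starHat, bil_apply starB π True (by simp [starB_apply])]
  simp

theorem succHat_apply {p q : ℕ} (hq : 1 ≤ q) (a : Equiv.Perm (Fin p) →₀ ℚ)
    (b : Equiv.Perm (Fin q) →₀ ℚ) (π : Equiv.Perm (Fin (p + q))) :
    succHat a b π = if QQ p q π then a (lef π) * b (rig π) else 0 :=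
  bil_apply succB π _ (fun σ τ => succB_apply hq σ τ π) a b

theorem precHat_apply {p q : ℕ} (hp : 1 ≤ p) (a : Equiv.Perm (Fin p) →₀ ℚ)
    (b : Equiv.Perm (Fin q) →₀ ℚ) (π : Equiv.Perm (Fin (p + q))) :
    precHat a b π = if ¬ QQ p q π then a (lef π) * b (rig π) else 0 :=
  bil_apply precB π _ (fun σ τ => precB_apply hp σ τ π) a b

theorem castF_apply {m n : ℕ} (h : m = n) (a : Equiv.Perm (Fin m) →₀ ℚ)
    (π : Equiv.Perm (Fin n)) : castF h a π = a ((finCongr h.symm).permCongr π) := by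
  subst h; rfl

theorem assoc_all {p q r : ℕ} (hp : 1 ≤ p) (hq : 1 ≤ q) (hr : 1 ≤ r)
    (π : Equiv.Perm (Fin (p + q + r))) (π' : Equiv.Perm (Fin (p + (q + r))))
    (h : ∀ i : Fin (p + (q + r)), (π' i : ℕ) = π (finCongr (Nat.add_assoc p q r).symm i)) :
    lef (lef π) = lef π' ∧ rig (lef π) = lef (rig π') ∧ rig π = rig (rig π') ∧
    ∃ A B C : ℕ, (QQ (p + q) r π ↔ (A < C ∧ B < C)) ∧ (QQ p q (lef π) ↔ A < B) ∧
      (QQ p (q + r) π' ↔ (A < B ∨ A < C)) ∧ (QQ q r (rig π') ↔ B < C) := by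
  have hA : ∀ i : Fin p, (π' (Fin.castAdd (q + r) i) : ℕ) =
      π (Fin.castAdd r (Fin.castAdd q i)) := fun i => h _
  have hB : ∀ i : Fin q, (π' (Fin.natAdd p (Fin.castAdd r i)) : ℕ) =
      π (Fin.castAdd r (Fin.natAdd p i)) := fun i => h _
  have hC : ∀ i : Fin r, (π' (Fin.natAdd p (Fin.natAdd q i)) : ℕ) =
      π (Fin.natAdd (p + q) i) := fun i => by
    rw [h]
    congr 2
    ext
    simp [Nat.add_assoc]
  refine ⟨?_, ?_, ?_, ?_⟩
  · refine perm_eq_of_lt _ _ fun i j hij => ?_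
    rw [lef_lt, Fin.lt_def, hA, hA] at hij
    rw [lef_lt, lef_lt]
    exact hij
  · refine perm_eq_of_lt _ _ fun i j hij => ?_
    rw [lef_lt, rig_lt, Fin.lt_def, hB, hB] at hij
    rw [rig_lt, lef_lt]
    exact hij
  · refine perm_eq_of_lt _ _ fun i j hij => ?_
    rw [rig_lt, rig_lt, Fin.lt_def, hC, hC] at hij
    rw [rig_lt]
    exact hij
  · have : Nonempty (Fin p) := ⟨⟨0, hp⟩⟩
    have : Nonempty (Fin q) := ⟨⟨0, hq⟩⟩
    have : Nonempty (Fin r) := ⟨⟨0, hr⟩⟩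
    obtain ⟨i, hi⟩ := Finite.exists_max
      fun i : Fin p => (π (Fin.castAdd r (Fin.castAdd q i)) : ℕ)
    obtain ⟨j, hj⟩ := Finite.exists_max
      fun i : Fin q => (π (Fin.castAdd r (Fin.natAdd p i)) : ℕ)
    obtain ⟨k, hk⟩ := Finite.exists_max
      fun i : Fin r => (π (Fin.natAdd (p + q) i) : ℕ)
    refine ⟨(π (Fin.castAdd r (Fin.castAdd q i)) : ℕ), (π (Fin.castAdd r (Fin.natAdd p j)) : ℕ),
      (π (Fin.natAdd (p + q) k) : ℕ), ?_, ?_, ?_, ?_⟩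
    · constructor
      · rintro ⟨l, hl⟩
        exact ⟨lt_of_lt_of_le (hl _) (hk l), lt_of_lt_of_le (hl _) (hk l)⟩
      · rintro ⟨h1, h2⟩
        refine ⟨k, fun l => ?_⟩
        induction l using Fin.addCases with
        | left l => exact lt_of_le_of_lt (hi l) h1
        | right l => exact lt_of_le_of_lt (hj l) h2
    · constructor
      · rintro ⟨l, hl⟩
        exact lt_of_lt_of_le ((lef_lt π _ _).1 (hl i)) (hj l)
      · intro h1
        exact ⟨j, fun l => (lef_lt π _ _).2 (lt_of_le_of_lt (hi l) h1)⟩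
    · constructor
      · rintro ⟨l, hl⟩
        have := hl i
        rw [Fin.lt_def, hA] at this
        induction l using Fin.addCases with
        | left l => rw [hB] at this; exact Or.inl (lt_of_lt_of_le this (hj l))
        | right l => rw [hC] at this; exact Or.inr (lt_of_lt_of_le this (hk l))
      · rintro (h1 | h1)
        · refine ⟨Fin.castAdd r j, fun l => ?_⟩
          rw [Fin.lt_def, hA, hB]
          exact lt_of_le_of_lt (hi l) h1
        · refine ⟨Fin.natAdd q k, fun l => ?_⟩
          rw [Fin.lt_def, hA, hC]
          exact lt_of_le_of_lt (hi l) h1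
    · constructor
      · rintro ⟨l, hl⟩
        have := hl j
        rw [rig_lt, Fin.lt_def, hB, hC] at this
        exact lt_of_lt_of_le this (hk l)
      · intro h1
        refine ⟨k, fun l => ?_⟩
        rw [rig_lt, Fin.lt_def, hB, hC]
        exact lt_of_le_of_lt (hj l) h1

/-- Proposition 4.5: on the augmentation ideal `⊕_{n≥1} ℚ[Sₙ]` of the
Malvenuto–Reutenauer algebra (whose elements are, degreewise, the `a ∈ ℚ[S_p]` with
`p ≥ 1`, the products `≺` and `≻` being extended bilinearly), the dendriform relations
hold: `(a≺b)≺c = a≺(b≺c) + a≺(b≻c)`, `a≻(b≺c) = (a≻b)≺c`,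
`a≻(b≻c) = (a≺b)≻c + (a≻b)≻c`; moreover `x * y = x≺y + x≻y`. -/
theorem stmt10 (p q r : ℕ) (hp : 1 ≤ p) (hq : 1 ≤ q) (hr : 1 ≤ r)
    (a : Equiv.Perm (Fin p) →₀ ℚ) (b : Equiv.Perm (Fin q) →₀ ℚ)
    (c : Equiv.Perm (Fin r) →₀ ℚ) :
    (precHat (precHat a b) c =
      castF (by omega : p + (q + r) = p + q + r)
        (precHat a (precHat b c) + precHat a (succHat b c))) ∧
    (castF (by omega : p + (q + r) = p + q + r) (succHat a (precHat b c)) =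
      precHat (succHat a b) c) ∧
    (castF (by omega : p + (q + r) = p + q + r) (succHat a (succHat b c)) =
      succHat (precHat a b) c + succHat (succHat a b) c) ∧
    (∀ (m n : ℕ), 1 ≤ m → 1 ≤ n →
      ∀ (x : Equiv.Perm (Fin m) →₀ ℚ) (y : Equiv.Perm (Fin n) →₀ ℚ),
        starHat x y = precHat x y + succHat x y) := by
  have key : ∀ π : Equiv.Perm (Fin (p + q + r)), _ := fun π =>
    assoc_all hp hq hr π ((finCongr (Nat.add_assoc p q r)).permCongr π) (fun _ => rfl)
  refine ⟨?_, ?_, ?_, ?_⟩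
  · ext π
    obtain ⟨h1, h2, h3, A, B, C, q1, q2, q3, q4⟩ := key π
    rw [castF_apply, Finsupp.add_apply, precHat_apply (by omega), precHat_apply hp,
      precHat_apply hp, precHat_apply hp, precHat_apply hq, succHat_apply hr, h1, h2, h3,
      q1, q2, q3, q4]
    split_ifs <;> first | (exfalso; omega) | ring
  · ext π
    obtain ⟨h1, h2, h3, A, B, C, q1, q2, q3, q4⟩ := key π
    rw [castF_apply, succHat_apply (by omega), precHat_apply hq, precHat_apply (by omega),
      succHat_apply hq, h1, h2, h3, q1, q2, q3, q4]
    split_ifs <;> first | (exfalso; omega) | ring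
  · ext π
    obtain ⟨h1, h2, h3, A, B, C, q1, q2, q3, q4⟩ := key π
    rw [castF_apply, Finsupp.add_apply, succHat_apply (by omega), succHat_apply hr,
      succHat_apply hr, succHat_apply hr, precHat_apply hp, succHat_apply hq, h1, h2, h3,
      q1, q2, q3, q4]
    split_ifs <;> first | (exfalso; omega) | ring
  · intro m n hm hn x y
    ext π
    rw [Finsupp.add_apply, starHat_apply, precHat_apply hm, succHat_apply hn]
    split_ifs <;> simp
end
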